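/- Let p ∈ (1,n), a ≥ n, and θ = (a−p)/(p(a−n)+n−p). Let A ∈ SGL_{n,+} be the block matrix determined by λ > 0, a⃗ ∈ ℝ^{n−1}, B ∈ GL_{n−1}, acting by A(t,x) = (λt, a⃗ t + Bx), and set g(t,x) = f(A(t,x)). Then the affine energy satisfies 𝒜_p(g) = |det B|^{−(a−p)/(p(a−1))} λ^{(p−1)(a−n)/(p(a−1))} 𝒜_p(f), and the boundary norm satisfies ∫_{∂ℝ^n_+} |g(0,x)|^{p(a−1)/(a−p)} dx = |det B|^{−1} ∫_{∂ℝ^n_+} |f(0,x)|^{p(a−1)/(a−p)} dx. -/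

import Mathlib

open MeasureTheory Real

/-- `ω_s = π^{s/2}/Γ(1+s/2)`. -/
noncomputable def omegaBall (s : ℝ) : ℝ := π ^ (s / 2) / Real.Gamma (1 + s / 2)

/-- The constant `c_{n,p}`. -/
noncomputable def cNP (n : ℕ) (p : ℝ) : ℝ :=
  ((n : ℝ) * omegaBall n) ^ (1 / (n : ℝ)) *
    (((n : ℝ) * omegaBall n * omegaBall (p - 1)) / (2 * omegaBall ((n : ℝ) + p - 2))) ^ (1 / p)

/-- The constant `c_{n,p,a}`. -/
noncomputable def cNPA (n : ℕ) (p a : ℝ) : ℝ :=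
  ((p * (a - 1) / ((p - 1) * ((n : ℝ) - 1))) *
    (((p - 1) * ((n : ℝ) - 1)) / (p * (a - (n : ℝ)) + (n : ℝ) - 1)) ^
      (1 / p + (p - 1) * (a - (n : ℝ)) / (p * (a - 1)))) ^ (1 / p)

/-- The upper half space as a subset of `ℝ × ℝ^{n-1}`. -/
def upperHalfP (n : ℕ) : Set (ℝ × EuclideanSpace ℝ (Fin (n - 1))) := {z | 0 ≤ z.1}

/-- The affine energy `ℰ_p(f)`. -/
noncomputable def affE (n : ℕ) (p : ℝ) (f : ℝ × EuclideanSpace ℝ (Fin (n - 1)) → ℝ) : ℝ :=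
  cNP (n - 1) p *
    (∫ ξ in Metric.sphere (0 : EuclideanSpace ℝ (Fin (n - 1))) 1,
        (∫ z in upperHalfP n, |fderiv ℝ f z (0, ξ)| ^ p) ^ (-(((n : ℝ) - 1) / p))
      ∂(μH[(n : ℝ) - 2])) ^ (-(1 / ((n : ℝ) - 1)))

/-- The ${\rm SGL}_{n,+}$-invariant quantity `𝒜_p(f)`, defined through its `p`-th power. -/
noncomputable def affA (n : ℕ) (p a : ℝ) (f : ℝ × EuclideanSpace ℝ (Fin (n - 1)) → ℝ) : ℝ :=
  (cNPA n p a ^ p * affE n p f ^ (p - 1 - (p - 1) * (a - (n : ℝ)) / (a - 1)) *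
    (⨅ v : EuclideanSpace ℝ (Fin (n - 1)),
      (∫ z in upperHalfP n, |fderiv ℝ f z (1, v)| ^ p) ^
        ((1 / p) * (1 + (p - 1) * (a - (n : ℝ)) / (a - 1))))) ^ (1 / p)

/-!
The chain rule and the change of variables by `A` turn the energy of `f ∘ A` in a direction `w`
into `(λ |det B|)⁻¹` times the energy of `f` in the direction `A w`. As `A` permutes the lines
spanned by the directions `(1, a⃗)`, the infimum is only rescaled.

For `ℰ_p` what remains is that `∫_{S^{d-1}} h (B ξ) dξ = |det B|⁻¹ ∫_{S^{d-1}} h` whenever `h` is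
homogeneous of degree `-d` in dimension `d`. In polar coordinates, for every positive measurable
`N` that is homogeneous of degree `1`, the integral of such an `h` over the sphere is
`d ∫_{N < 1} N ^ d h dx`. Taking `N = ‖B ·‖` for `h ∘ B` and `N = ‖·‖` for `h`, the formula becomes
the linear change of variables in Lebesgue measure.

The polar coordinates give the cone measure of the sphere, while `affE` integrates against the
Hausdorff measure. Both are finite and invariant under the compact group `O(d)`, which acts
transitively on the sphere, so averaging over its Haar measure shows that they are proportional.
-/

section InvariantMeasures

variable {G X : Type*} [Group G] [MeasurableSpace G] [MeasurableMul G] [MeasurableInv G]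
  [MeasurableSpace X] [MulAction G X] [MeasurableSMul₂ G X]

theorem measure_univ_smul_eq_smul_map_of_ae_mem_orbit (ρ : Measure G) [SFinite ρ]
    [ρ.IsMulLeftInvariant] (μ : Measure X) [SFinite μ] [SMulInvariantMeasure G X μ] {x₀ : X}
    (hμ : ∀ᵐ x ∂μ, x ∈ MulAction.orbit G x₀) :
    ρ .univ • μ = μ .univ • ρ.map (fun g ↦ g⁻¹ • x₀) := by
  ext A hA
  have hmeas : MeasurableSet {q : G × X | q.1⁻¹ • q.2 ∈ A} :=
    (measurable_fst.inv.smul measurable_snd) hA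
  have h_orbit : ∀ᵐ x ∂μ, ρ {g | g⁻¹ • x ∈ A} = ρ {g | g⁻¹ • x₀ ∈ A} := by
    filter_upwards [hμ]
    rintro _ ⟨k, rfl⟩
    rw [← measure_preimage_mul ρ k⁻¹ {g | g⁻¹ • x₀ ∈ A}]
    simp [mul_smul]
  calc ρ .univ * μ A = ∫⁻ g, μ ((g⁻¹ • ·) ⁻¹' A) ∂ρ := by
        simp [measure_preimage_smul, mul_comm]
    _ = ∫⁻ x, ρ {g | g⁻¹ • x ∈ A} ∂μ :=
        (Measure.prod_apply hmeas).symm.trans (Measure.prod_apply_symm hmeas)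
    _ = μ .univ * ρ.map (fun g ↦ g⁻¹ • x₀) A := by
        rw [lintegral_congr_ae h_orbit, lintegral_const, mul_comm,
          Measure.map_apply (measurable_inv.smul_const x₀) hA]
        rfl

theorem measure_univ_smul_comm_of_ae_mem_orbit (ρ : Measure G) [IsFiniteMeasure ρ] [NeZero ρ]
    [ρ.IsMulLeftInvariant] (μ ν : Measure X) [SFinite μ] [SFinite ν]
    [SMulInvariantMeasure G X μ] [SMulInvariantMeasure G X ν] {x₀ : X}
    (hμ : ∀ᵐ x ∂μ, x ∈ MulAction.orbit G x₀) (hν : ∀ᵐ x ∂ν, x ∈ MulAction.orbit G x₀) :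
    ν .univ • μ = μ .univ • ν := by
  have h : ρ .univ • ν .univ • μ = ρ .univ • μ .univ • ν := by
    rw [smul_comm, measure_univ_smul_eq_smul_map_of_ae_mem_orbit ρ μ hμ, smul_comm,
      ← measure_univ_smul_eq_smul_map_of_ae_mem_orbit ρ ν hν, smul_comm]
  ext A
  have hA := DFunLike.congr_fun h A
  simpa only [Measure.smul_apply, smul_eq_mul,
    ENNReal.mul_right_inj (NeZero.ne (ρ .univ)) (measure_ne_top ρ _)] using hA

end InvariantMeasures

section OrthogonalGroup

variable {E : Type*} [NormedAddCommGroup E] [InnerProductSpace ℝ E] [FiniteDimensional ℝ E]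

instance : ContinuousSMul (unitary (E →L[ℝ] E)) E where
  continuous_smul := (continuous_subtype_val.comp continuous_fst).clm_apply continuous_snd

instance : CompactSpace (unitary (E →L[ℝ] E)) := by
  refine isCompact_iff_compactSpace.mp (Metric.isCompact_of_isClosed_isBounded isClosed_unitary
    (Metric.isBounded_closedBall (x := (0 : E →L[ℝ] E)) (r := 1) |>.subset fun g hg ↦ ?_))
  rw [mem_closedBall_zero_iff]
  refine g.opNorm_le_bound zero_le_one fun x ↦ ?_
  exact ((Unitary.linearIsometryEquiv ⟨g, hg⟩).norm_map x).le.trans_eq (one_mul _).symm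

theorem mem_orbit_unitary_of_norm_eq {x y : E} (h : ‖x‖ = ‖y‖) :
    y ∈ MulAction.orbit (unitary (E →L[ℝ] E)) x :=
  ⟨Unitary.linearIsometryEquiv.symm (ℝ ∙ (x - y))ᗮ.reflection, Submodule.reflection_sub h⟩

variable [MeasurableSpace E] [BorelSpace E]

theorem measure_univ_smul_comm_of_ae_mem_sphere {r : ℝ} (μ ν : Measure E) [SFinite μ] [SFinite ν]
    (hμ : ∀ᵐ x ∂μ, x ∈ Metric.sphere 0 r) (hν : ∀ᵐ x ∂ν, x ∈ Metric.sphere 0 r)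
    (hμ_inv : ∀ e : E ≃ₗᵢ[ℝ] E, μ.map e = μ) (hν_inv : ∀ e : E ≃ₗᵢ[ℝ] E, ν.map e = ν) :
    ν .univ • μ = μ .univ • ν := by
  let G := unitary (E →L[ℝ] E)
  let : MeasurableSpace G := borel G
  have : BorelSpace G := ⟨rfl⟩
  have invariant (m : Measure E) (hm : ∀ e : E ≃ₗᵢ[ℝ] E, m.map e = m) :
      SMulInvariantMeasure G E m := ⟨fun g A hA ↦ by
    let e := Unitary.linearIsometryEquiv g
    rw [← Measure.map_apply (f := (g • ·)) e.continuous.measurable hA]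
    exact DFunLike.congr_fun (hm e) A⟩
  have := invariant μ hμ_inv
  have := invariant ν hν_inv
  rcases (Metric.sphere (0 : E) r).eq_empty_or_nonempty with h | ⟨x₀, hx₀⟩
  · simp_all
  have mem_orbit {x : E} (hx : x ∈ Metric.sphere 0 r) : x ∈ MulAction.orbit G x₀ :=
    mem_orbit_unitary_of_norm_eq <|
      (mem_sphere_zero_iff_norm.mp hx₀).trans (mem_sphere_zero_iff_norm.mp hx).symm
  exact measure_univ_smul_comm_of_ae_mem_orbit Measure.haar μ ν
    (hμ.mono fun _ ↦ mem_orbit) (hν.mono fun _ ↦ mem_orbit)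

end OrthogonalGroup

section HausdorffMeasure

variable {E : Type*} [NormedAddCommGroup E] [InnerProductSpace ℝ E]

theorem sphere_inter_inner_nonpos_subset_stereoInvFunAux_image {v : E} (hv : ‖v‖ = 1) :
    {x ∈ Metric.sphere (0 : E) 1 | inner ℝ v x ≤ 0} ⊆
      (fun w : (ℝ ∙ v)ᗮ ↦ stereoInvFunAux v (w : E)) '' Metric.closedBall 0 2 := by
  rintro x ⟨hx, hvx⟩
  have hxv : x ≠ v := by
    rintro rfl
    norm_num [hv] at hvx
  refine ⟨stereoToFun v x, ?_, congrArg Subtype.val (stereo_left_inv hv (x := ⟨x, hx⟩) hxv)⟩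
  have h_proj : ‖(ℝ ∙ v)ᗮ.orthogonalProjectionOnto x‖ ≤ 1 :=
    ((ℝ ∙ v)ᗮ.norm_orthogonalProjectionOnto_apply_le x).trans_eq (mem_sphere_zero_iff_norm.mp hx)
  have h_scale : |2 / (1 - inner ℝ v x)| ≤ 2 := by
    rw [abs_of_nonneg (div_nonneg zero_le_two (by linarith)), div_le_iff₀ (by linarith)]
    linarith
  rw [mem_closedBall_zero_iff, stereoToFun, norm_smul, innerSL_apply_apply, Real.norm_eq_abs]
  simpa using mul_le_mul h_scale h_proj (norm_nonneg _) zero_le_two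

variable [FiniteDimensional ℝ E] [MeasurableSpace E] [BorelSpace E]

theorem hausdorffMeasure_image_lt_top_of_contDiff {F : Type*} [NormedAddCommGroup F]
    [InnerProductSpace ℝ F] [MeasurableSpace F] [BorelSpace F] {φ : E → F} (hφ : ContDiff ℝ 1 φ)
    {K : Set E} (hK : IsCompact K) (hK' : Convex ℝ K) :
    μH[Module.finrank ℝ E] (φ '' K) < ⊤ := by
  obtain ⟨C, hC⟩ := hφ.contDiffOn.exists_lipschitzOnWith one_ne_zero hK' hK
  exact (hC.hausdorffMeasure_image_le (Nat.cast_nonneg _)).trans_lt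
    (ENNReal.mul_lt_top (by simp) hK.measure_lt_top)

theorem hausdorffMeasure_sphere_lt_top [Nontrivial E] :
    μH[(Module.finrank ℝ E : ℝ) - 1] (Metric.sphere (0 : E) 1) < ⊤ := by
  have cap_lt_top {v : E} (hv : ‖v‖ = 1) :
      μH[(Module.finrank ℝ E : ℝ) - 1] {x ∈ Metric.sphere (0 : E) 1 | inner ℝ v x ≤ 0} < ⊤ := by
    have hv₀ : v ≠ 0 := by
      rintro rfl
      simp at hv
    have h_rank : (Module.finrank ℝ E : ℝ) - 1 = Module.finrank ℝ (ℝ ∙ v)ᗮ := by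
      rw [← (ℝ ∙ v).finrank_add_finrank_orthogonal, finrank_span_singleton hv₀]
      simp
    rw [h_rank]
    exact (measure_mono (sphere_inter_inner_nonpos_subset_stereoInvFunAux_image hv)).trans_lt <|
      hausdorffMeasure_image_lt_top_of_contDiff
        (contDiff_stereoInvFunAux.comp (ℝ ∙ v)ᗮ.subtypeL.contDiff)
        (isCompact_closedBall _ _) (convex_closedBall _ _)
  obtain ⟨v, hv⟩ := exists_norm_eq E zero_le_one
  refine (measure_mono (t := _ ∪ _) fun x hx ↦ ?_).trans_lt <|
    measure_union_lt_top (cap_lt_top hv) (cap_lt_top (v := -v) (by rwa [norm_neg]))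
  exact (le_total (inner ℝ v x) 0).imp (⟨hx, ·⟩) fun h ↦ ⟨hx, by simpa using h⟩

end HausdorffMeasure

section PolarCoordinates

open scoped ENNReal

variable {E : Type*} [NormedAddCommGroup E] [NormedSpace ℝ E] [FiniteDimensional ℝ E]
  [MeasurableSpace E] [BorelSpace E] (μ : Measure E) [μ.IsAddHaarMeasure]

theorem lintegral_eq_lintegral_toSphere_lintegral_volumeIoiPow [Nontrivial E] {F : E → ℝ≥0∞}
    (hF : Measurable F) :
    ∫⁻ x, F x ∂μ =
      ∫⁻ ω, ∫⁻ r, F (r.1 • ω.1) ∂Measure.volumeIoiPow (Module.finrank ℝ E - 1) ∂μ.toSphere := by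
  calc ∫⁻ x, F x ∂μ = ∫⁻ x : ({0}ᶜ : Set E), F x ∂μ.comap (↑) := by
        rw [lintegral_subtype_comap (measurableSet_singleton _).compl, restrict_compl_singleton]
    _ = ∫⁻ q, F (q.2.1 • q.1.1)
          ∂μ.toSphere.prod (Measure.volumeIoiPow (Module.finrank ℝ E - 1)) := by
        rw [← (μ.measurePreserving_homeomorphUnitSphereProd).lintegral_comp_emb
          (Homeomorph.measurableEmbedding _)]
        refine lintegral_congr fun x ↦ ?_
        simp [smul_smul, mul_inv_cancel₀ (norm_ne_zero_iff.mpr x.2)]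
    _ = _ := lintegral_prod _ (by fun_prop)

theorem volumeIoiPow_apply_setOf_mul_lt_one {d : ℕ} (hd : d ≠ 0) {c : ℝ} (hc : 0 < c) :
    d * (ENNReal.ofReal c ^ d * Measure.volumeIoiPow (d - 1) {r | r.1 * c < 1}) = 1 := by
  have h_set : {r : Set.Ioi (0 : ℝ) | r.1 * c < 1} = Set.Iio ⟨c⁻¹, inv_pos.mpr hc⟩ := by
    ext r
    exact (by rw [← one_div, lt_div_iff₀ hc] : r.1 * c < 1 ↔ r.1 < c⁻¹)
  have h_cast : ((d - 1 : ℕ) : ℝ) + 1 = d := by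
    exact_mod_cast Nat.sub_add_cancel (Nat.one_le_iff_ne_zero.mpr hd)
  rw [h_set, Measure.volumeIoiPow_apply_Iio, h_cast, ← ENNReal.ofReal_pow hc.le,
    ← ENNReal.ofReal_natCast d, ← ENNReal.ofReal_mul (by positivity),
    ← ENNReal.ofReal_mul (by positivity), Nat.sub_add_cancel (Nat.one_le_iff_ne_zero.mpr hd)]
  have hcd : c ^ d ≠ 0 := pow_ne_zero d hc.ne'
  field_simp
  simp [hcd]

theorem lintegral_toSphere_eq_setLIntegral_of_homogeneous [Nontrivial E] {h : E → ℝ≥0∞}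
    (hh : Measurable h)
    (h_hom : ∀ r : ℝ, 0 < r → ∀ x, ENNReal.ofReal r ^ Module.finrank ℝ E * h (r • x) = h x)
    {N : E → ℝ} (hN : Measurable N) (hN_pos : ∀ x, x ≠ 0 → 0 < N x)
    (hN_hom : ∀ r : ℝ, 0 < r → ∀ x, N (r • x) = r * N x) :
    ∫⁻ ω, h ω ∂μ.toSphere =
      Module.finrank ℝ E *
        ∫⁻ x in {x | N x < 1}, ENNReal.ofReal (N x) ^ Module.finrank ℝ E * h x ∂μ := by
  set d := Module.finrank ℝ E
  have hS : MeasurableSet {x | N x < 1} := measurableSet_lt hN measurable_const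
  have h_radial (ω : Metric.sphere (0 : E) 1) :
      ∫⁻ r, {x | N x < 1}.indicator (fun x ↦ ENNReal.ofReal (N x) ^ d * h x) (r.1 • ω.1)
          ∂Measure.volumeIoiPow (d - 1) =
        h ω * (ENNReal.ofReal (N ω) ^ d * Measure.volumeIoiPow (d - 1) {r | r.1 * N ω < 1}) := by
    rw [← mul_assoc, ← setLIntegral_const, ← lintegral_indicator
      (measurableSet_lt (by fun_prop) measurable_const)]
    refine lintegral_congr fun r ↦ ?_
    simp only [Set.indicator, Set.mem_ofPred_eq, hN_hom r r.2]
    congr 1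
    rw [← h_hom r r.2 ω, ENNReal.ofReal_mul r.2.le]
    ring
  rw [← lintegral_indicator hS, lintegral_eq_lintegral_toSphere_lintegral_volumeIoiPow μ
    (.indicator (by fun_prop) hS),
    ← lintegral_const_mul' _ _ (ENNReal.natCast_ne_top d)]
  refine lintegral_congr fun ω ↦ ?_
  rw [h_radial, mul_left_comm, volumeIoiPow_apply_setOf_mul_lt_one Module.finrank_pos.ne'
    (hN_pos _ (ne_zero_of_mem_unit_sphere ω)), mul_one]

theorem map_linearEquiv_eq_ofReal_smul (L : E ≃ₗ[ℝ] E) :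
    μ.map L = ENNReal.ofReal |LinearMap.det (L : E →ₗ[ℝ] E)|⁻¹ • μ := by
  rw [← abs_inv]
  exact Measure.map_linearMap_addHaar_eq_smul_addHaar μ L.isUnit_det'.ne_zero

theorem integral_comp_linearEquiv {F : Type*} [NormedAddCommGroup F] [NormedSpace ℝ F]
    (L : E ≃ₗ[ℝ] E) (φ : E → F) :
    ∫ x, φ (L x) ∂μ = |LinearMap.det (L : E →ₗ[ℝ] E)|⁻¹ • ∫ x, φ x ∂μ := by
  have h_emb : MeasurableEmbedding L :=
    L.toContinuousLinearEquiv.toHomeomorph.measurableEmbedding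
  rw [← h_emb.integral_map, map_linearEquiv_eq_ofReal_smul, integral_smul_measure,
    ENNReal.toReal_ofReal (by positivity)]

theorem lintegral_toSphere_comp_linearEquiv_of_homogeneous [Nontrivial E] (B : E ≃ₗ[ℝ] E)
    {h : E → ℝ≥0∞} (hh : Measurable h)
    (h_hom : ∀ r : ℝ, 0 < r → ∀ x, ENNReal.ofReal r ^ Module.finrank ℝ E * h (r • x) = h x) :
    ∫⁻ ω, h (B ω) ∂μ.toSphere =
      ENNReal.ofReal |LinearMap.det (B : E →ₗ[ℝ] E)|⁻¹ * ∫⁻ ω, h ω ∂μ.toSphere := by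
  have hB : Measurable B := B.toContinuousLinearEquiv.continuous.measurable
  rw [lintegral_toSphere_eq_setLIntegral_of_homogeneous μ (h := fun x ↦ h (B x)) (hh.comp hB)
      (fun r hr x ↦ by simp [h_hom r hr]) (N := fun x ↦ ‖B x‖) hB.norm (by simp)
      (fun r hr x ↦ by simp [norm_smul, abs_of_pos hr]),
    lintegral_toSphere_eq_setLIntegral_of_homogeneous μ hh h_hom (N := norm) measurable_norm
      (by simp) (fun r hr x ↦ by simp [norm_smul, abs_of_pos hr]),
    mul_left_comm, ← smul_eq_mul (ENNReal.ofReal _), ← lintegral_smul_measure,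
    ← Measure.restrict_smul, ← map_linearEquiv_eq_ofReal_smul μ B,
    setLIntegral_map (measurableSet_lt measurable_norm measurable_const) (by fun_prop) hB]
  rfl

end PolarCoordinates

section SphereIntegrals

open scoped ENNReal

variable {E : Type*} [NormedAddCommGroup E] [InnerProductSpace ℝ E] [MeasurableSpace E]
  [BorelSpace E]

theorem map_linearIsometryEquiv_hausdorffMeasure_restrict_sphere (s r : ℝ) (e : E ≃ₗᵢ[ℝ] E) :
    (μH[s].restrict (Metric.sphere 0 r)).map e = μH[s].restrict (Metric.sphere (0 : E) r) := by
  have h_preimage : e.toIsometryEquiv ⁻¹' Metric.sphere 0 r = Metric.sphere 0 r := by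
    ext x
    simp
  have h_restrict := (e.toIsometryEquiv.measurePreserving_hausdorffMeasure s).restrict_preimage
    (Metric.isClosed_sphere (x := (0 : E)) (ε := r)).measurableSet
  rw [h_preimage] at h_restrict
  exact h_restrict.map_eq

variable [FiniteDimensional ℝ E]

theorem map_linearIsometryEquiv_map_toSphere [Nontrivial E] (μ : Measure E) [μ.IsAddHaarMeasure]
    (e : E ≃ₗᵢ[ℝ] E) :
    (μ.toSphere.map (↑)).map e = μ.toSphere.map ((↑) : Metric.sphere (0 : E) 1 → E) := by
  ext A hA
  -- The homogeneous extension of degree `-d` of the indicator of `A` on the sphere.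
  set h : E → ℝ≥0∞ := fun x ↦
    (ENNReal.ofReal ‖x‖)⁻¹ ^ Module.finrank ℝ E * A.indicator 1 (‖x‖⁻¹ • x) with h_def
  have hh : Measurable h := by
    have : Measurable (A.indicator (1 : E → ℝ≥0∞)) := measurable_one.indicator hA
    fun_prop
  have h_hom (r : ℝ) (hr : 0 < r) (x : E) :
      ENNReal.ofReal r ^ Module.finrank ℝ E * h (r • x) = h x := by
    have hr' : ENNReal.ofReal r ≠ 0 := by simpa
    simp only [h_def, norm_smul, Real.norm_eq_abs, abs_of_pos hr, ENNReal.ofReal_mul hr.le]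
    rw [ENNReal.mul_inv (.inl hr') (.inl ENNReal.ofReal_ne_top), ← mul_assoc, ← mul_pow,
      ← mul_assoc, ENNReal.mul_inv_cancel hr' ENNReal.ofReal_ne_top, one_mul, smul_smul, mul_inv,
      mul_right_comm, inv_mul_cancel₀ hr.ne', one_mul]
  have h_sphere {x : E} (hx : ‖x‖ = 1) : h x = A.indicator 1 x := by
    simp only [h_def, hx, ENNReal.ofReal_one, inv_one, one_pow, one_mul, one_smul]
  have h_det : |LinearMap.det (e.toLinearEquiv : E →ₗ[ℝ] E)|⁻¹ = 1 := by
    rw [← LinearMap.normDet_eq_abs_det, inv_eq_one]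
    exact e.toLinearIsometry.normDet_eq_one
  have h_comp := lintegral_toSphere_comp_linearEquiv_of_homogeneous μ e.toLinearEquiv hh h_hom
  rw [← lintegral_indicator_one hA, ← lintegral_indicator_one hA,
    lintegral_map (by fun_prop) e.continuous.measurable,
    lintegral_map (by fun_prop) measurable_subtype_coe,
    lintegral_map (by fun_prop) measurable_subtype_coe]
  simpa [h_sphere, h_det] using h_comp

theorem toSphere_univ_smul_hausdorffMeasure_restrict_sphere [Nontrivial E] (μ : Measure E)
    [μ.IsAddHaarMeasure] :
    μ.toSphere .univ • μH[(Module.finrank ℝ E : ℝ) - 1].restrict (Metric.sphere (0 : E) 1) =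
      μH[(Module.finrank ℝ E : ℝ) - 1] (Metric.sphere (0 : E) 1) • μ.toSphere.map (↑) := by
  have hS : MeasurableSet (Metric.sphere (0 : E) 1) := Metric.isClosed_sphere.measurableSet
  have : IsFiniteMeasure (μH[(Module.finrank ℝ E : ℝ) - 1].restrict (Metric.sphere (0 : E) 1)) :=
    isFiniteMeasure_restrict.mpr hausdorffMeasure_sphere_lt_top.ne
  have h_mem : ∀ᵐ x ∂μ.toSphere.map ((↑) : Metric.sphere (0 : E) 1 → E), x ∈ Metric.sphere 0 1 :=
    (ae_map_iff measurable_subtype_coe.aemeasurable hS).mpr (ae_of_all _ Subtype.prop)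
  simpa [Measure.map_apply measurable_subtype_coe] using
    measure_univ_smul_comm_of_ae_mem_sphere _ _ (ae_restrict_mem hS) h_mem
      (map_linearIsometryEquiv_hausdorffMeasure_restrict_sphere _ 1)
      (map_linearIsometryEquiv_map_toSphere μ)

theorem setLIntegral_sphere_hausdorffMeasure_comp_linearEquiv_of_homogeneous [Nontrivial E]
    (B : E ≃ₗ[ℝ] E) {h : E → ℝ≥0∞} (hh : Measurable h)
    (h_hom : ∀ r : ℝ, 0 < r → ∀ x, ENNReal.ofReal r ^ Module.finrank ℝ E * h (r • x) = h x) :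
    ∫⁻ x in Metric.sphere 0 1, h (B x) ∂μH[(Module.finrank ℝ E : ℝ) - 1] =
      ENNReal.ofReal |LinearMap.det (B : E →ₗ[ℝ] E)|⁻¹ *
        ∫⁻ x in Metric.sphere 0 1, h x ∂μH[(Module.finrank ℝ E : ℝ) - 1] := by
  have hB : Measurable B := B.toContinuousLinearEquiv.continuous.measurable
  have h_ne_zero : (volume : Measure E).toSphere .univ ≠ 0 := by
    simpa only [ne_eq, Measure.measure_univ_eq_zero] using Measure.toSphere_ne_zero volume
  rw [← ENNReal.mul_right_inj h_ne_zero (measure_ne_top _ _), mul_left_comm, ← smul_eq_mul,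
    ← smul_eq_mul (Measure.toSphere _ _), ← lintegral_smul_measure, ← lintegral_smul_measure,
    toSphere_univ_smul_hausdorffMeasure_restrict_sphere, lintegral_smul_measure,
    lintegral_smul_measure, lintegral_map (by fun_prop) measurable_subtype_coe,
    lintegral_map hh measurable_subtype_coe,
    lintegral_toSphere_comp_linearEquiv_of_homogeneous volume B hh h_hom, smul_eq_mul, smul_eq_mul,
    mul_left_comm]

theorem setIntegral_sphere_hausdorffMeasure_comp_linearEquiv_of_homogeneous [Nontrivial E]
    (B : E ≃ₗ[ℝ] E) {h : E → ℝ} (hh : Measurable h) (h_nonneg : 0 ≤ h)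
    (h_hom : ∀ r : ℝ, 0 < r → ∀ x, r ^ Module.finrank ℝ E * h (r • x) = h x) :
    ∫ x in Metric.sphere 0 1, h (B x) ∂μH[(Module.finrank ℝ E : ℝ) - 1] =
      |LinearMap.det (B : E →ₗ[ℝ] E)|⁻¹ *
        ∫ x in Metric.sphere 0 1, h x ∂μH[(Module.finrank ℝ E : ℝ) - 1] := by
  have hB : Measurable B := B.toContinuousLinearEquiv.continuous.measurable
  have h_hom' (r : ℝ) (hr : 0 < r) (x : E) :
      ENNReal.ofReal r ^ Module.finrank ℝ E * ENNReal.ofReal (h (r • x)) =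
        ENNReal.ofReal (h x) := by
    rw [← ENNReal.ofReal_pow hr.le, ← ENNReal.ofReal_mul (by positivity), h_hom r hr]
  rw [integral_eq_lintegral_of_nonneg_ae (ae_of_all _ fun x ↦ h_nonneg (B x))
      (hh.comp hB).aestronglyMeasurable,
    integral_eq_lintegral_of_nonneg_ae (ae_of_all _ h_nonneg) hh.aestronglyMeasurable,
    setLIntegral_sphere_hausdorffMeasure_comp_linearEquiv_of_homogeneous B
      hh.ennreal_ofReal h_hom', ENNReal.toReal_mul, ENNReal.toReal_ofReal (by positivity)]

end SphereIntegrals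

section DirectionalEnergy

variable {X : Type*} [NormedAddCommGroup X] [NormedSpace ℝ X] [MeasurableSpace X]

/-- The energy `∫ |⟨∇f, w⟩|^p dμ` of `f` in the direction `w`, from which `affE` and `affA` are
built with `μ` the Lebesgue measure of the half space. -/
noncomputable def dirEnergy (μ : Measure X) (p : ℝ) (f : X → ℝ) (w : X) : ℝ :=
  ∫ z, |fderiv ℝ f z w| ^ p ∂μ

theorem dirEnergy_nonneg (μ : Measure X) (p : ℝ) (f : X → ℝ) (w : X) : 0 ≤ dirEnergy μ p f w :=
  integral_nonneg fun _ ↦ by positivity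

theorem dirEnergy_smul (μ : Measure X) (p : ℝ) (f : X → ℝ) (r : ℝ) (w : X) :
    dirEnergy μ p f (r • w) = |r| ^ p * dirEnergy μ p f w := by
  simp only [dirEnergy, map_smul, smul_eq_mul, abs_mul, Real.mul_rpow (abs_nonneg _) (abs_nonneg _),
    integral_const_mul]

theorem dirEnergy_smul_measure {c : ℝ} (hc : 0 ≤ c) (μ : Measure X) (p : ℝ) (f : X → ℝ) (w : X) :
    dirEnergy (ENNReal.ofReal c • μ) p f w = c * dirEnergy μ p f w := by
  rw [dirEnergy, integral_smul_measure, ENNReal.toReal_ofReal hc, smul_eq_mul, dirEnergy]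

variable [BorelSpace X]

theorem dirEnergy_comp_continuousLinearEquiv (μ : Measure X) (p : ℝ) (f : X → ℝ) (L : X ≃L[ℝ] X)
    (w : X) : dirEnergy μ p (f ∘ L) w = dirEnergy (μ.map L) p f (L w) := by
  simp only [dirEnergy, L.comp_right_fderiv, ContinuousLinearMap.comp_apply]
  exact (L.toHomeomorph.measurableEmbedding.integral_map fun z ↦ |fderiv ℝ f z (L w)| ^ p).symm

theorem measurable_dirEnergy [FiniteDimensional ℝ X] (μ : Measure X) [SFinite μ] (p : ℝ)
    (f : X → ℝ) : Measurable (dirEnergy μ p f) := by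
  have h_fderiv : Measurable fun q : X × X ↦ fderiv ℝ f q.2 q.1 :=
    ContinuousLinearMap.measurable_apply₂.comp
      (((measurable_fderiv ℝ f).comp measurable_snd).prodMk measurable_fst)
  exact (h_fderiv.abs.pow_const p).stronglyMeasurable.integral_prod_right.measurable

theorem dirEnergy_restrict_comp_linearEquiv [FiniteDimensional ℝ X] (μ : Measure X)
    [μ.IsAddHaarMeasure] (p : ℝ) (f : X → ℝ) (L : X ≃ₗ[ℝ] X) {S : Set X} (hS : L ⁻¹' S = S)
    (w : X) :
    dirEnergy (μ.restrict S) p (f ∘ L) w =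
      |LinearMap.det (L : X →ₗ[ℝ] X)|⁻¹ * dirEnergy (μ.restrict S) p f (L w) := by
  have h_map : (μ.restrict S).map L =
      ENNReal.ofReal |LinearMap.det (L : X →ₗ[ℝ] X)|⁻¹ • μ.restrict S := by
    have h_emb : MeasurableEmbedding L :=
      L.toContinuousLinearEquiv.toHomeomorph.measurableEmbedding
    rw [← Measure.restrict_smul, ← map_linearEquiv_eq_ofReal_smul, h_emb.restrict_map, hS]
  rw [← dirEnergy_smul_measure (by positivity), ← h_map]
  exact dirEnergy_comp_continuousLinearEquiv _ p f L.toContinuousLinearEquiv w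

end DirectionalEnergy

section BlockTriangular

theorem det_skewProd {R M N : Type*} [CommRing R] [AddCommGroup M] [Module R M] [Module.Free R M]
    [Module.Finite R M] [AddCommGroup N] [Module R N] [Module.Free R N] [Module.Finite R N]
    (A : M ≃ₗ[R] M) (B : N ≃ₗ[R] N) (C : M →ₗ[R] N) :
    LinearMap.det (A.skewProd B C : M × N →ₗ[R] M × N) =
      LinearMap.det (A : M →ₗ[R] M) * LinearMap.det (B : N →ₗ[R] N) := by
  classical
  let b := Module.Free.chooseBasis R M
  let c := Module.Free.chooseBasis R N
  have h_blocks : LinearMap.toMatrix (b.prod c) (b.prod c) (A.skewProd B C) =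
      Matrix.fromBlocks (LinearMap.toMatrix b b A) 0 (LinearMap.toMatrix b c C)
        (LinearMap.toMatrix c c B) := by
    ext (i | i) (j | j) <;> simp [LinearMap.toMatrix_apply]
  rw [← LinearMap.det_toMatrix (b.prod c), h_blocks, Matrix.det_fromBlocks_zero₁₂,
    LinearMap.det_toMatrix, LinearMap.det_toMatrix]

variable {E : Type*} [AddCommGroup E] [Module ℝ E]

/-- The element `(t, x) ↦ (λt, t a + Bx)` of `SGL_{n,+}`. -/
noncomputable def sglEquiv {lam : ℝ} (hlam : lam ≠ 0) (a : E) (B : E ≃ₗ[ℝ] E) :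
    (ℝ × E) ≃ₗ[ℝ] ℝ × E :=
  (LinearEquiv.smulOfNeZero ℝ ℝ lam hlam).skewProd B (LinearMap.toSpanSingleton ℝ E a)

theorem sglEquiv_apply {lam : ℝ} (hlam : lam ≠ 0) (a : E) (B : E ≃ₗ[ℝ] E) (z : ℝ × E) :
    sglEquiv hlam a B z = (lam * z.1, z.1 • a + B z.2) := by
  simp [sglEquiv, add_comm]

theorem det_sglEquiv [FiniteDimensional ℝ E] {lam : ℝ} (hlam : lam ≠ 0) (a : E) (B : E ≃ₗ[ℝ] E) :
    LinearMap.det (sglEquiv hlam a B : ℝ × E →ₗ[ℝ] ℝ × E) =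
      lam * LinearMap.det (B : E →ₗ[ℝ] E) := by
  rw [sglEquiv, det_skewProd]
  simp

end BlockTriangular

section HalfSpace

variable {E : Type*} [NormedAddCommGroup E] [InnerProductSpace ℝ E] [FiniteDimensional ℝ E]
  [MeasurableSpace E] [BorelSpace E]

/-- Lebesgue measure on the half space of `ℝ × E`; for `E = ℝ^{n-1}` it is definitionally the
restriction of Lebesgue measure to `upperHalfP n`. -/
noncomputable abbrev halfSpaceMeasure (E : Type*) [NormedAddCommGroup E] [InnerProductSpace ℝ E]
    [FiniteDimensional ℝ E] [MeasurableSpace E] [BorelSpace E] : Measure (ℝ × E) :=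
  volume.restrict {z | 0 ≤ z.1}

variable (p : ℝ) (f : ℝ × E → ℝ) {lam : ℝ} (hlam : 0 < lam) (a : E) (B : E ≃ₗ[ℝ] E)

theorem dirEnergy_comp_sglEquiv (w : ℝ × E) :
    dirEnergy (halfSpaceMeasure E) p (f ∘ sglEquiv hlam.ne' a B) w =
      (lam * |LinearMap.det (B : E →ₗ[ℝ] E)|)⁻¹ *
        dirEnergy (halfSpaceMeasure E) p f (sglEquiv hlam.ne' a B w) := by
  have h_haar : (volume : Measure (ℝ × E)).IsAddHaarMeasure :=
    Measure.prod.instIsAddHaarMeasure volume volume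
  have h_preimage : sglEquiv hlam.ne' a B ⁻¹' {z | 0 ≤ z.1} = {z | 0 ≤ z.1} := by
    ext z
    simp [sglEquiv_apply, hlam]
  rw [dirEnergy_restrict_comp_linearEquiv _ p f _ h_preimage, det_sglEquiv, abs_mul,
    abs_of_pos hlam]

theorem setIntegral_sphere_dirEnergy_comp_sglEquiv [Nontrivial E] (hp : p ≠ 0) :
    ∫ ξ in Metric.sphere 0 1, dirEnergy (halfSpaceMeasure E) p (f ∘ sglEquiv hlam.ne' a B) (0, ξ) ^
        (-(Module.finrank ℝ E / p)) ∂μH[(Module.finrank ℝ E : ℝ) - 1] =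
      (lam * |LinearMap.det (B : E →ₗ[ℝ] E)|) ^ (Module.finrank ℝ E / p) *
        (|LinearMap.det (B : E →ₗ[ℝ] E)|⁻¹ *
          ∫ ξ in Metric.sphere 0 1, dirEnergy (halfSpaceMeasure E) p f (0, ξ) ^
            (-(Module.finrank ℝ E / p)) ∂μH[(Module.finrank ℝ E : ℝ) - 1]) := by
  have h_meas : Measurable fun x : E ↦
      dirEnergy (halfSpaceMeasure E) p f (0, x) ^ (-(Module.finrank ℝ E / p)) :=
    ((measurable_dirEnergy _ p f).comp measurable_prodMk_left).pow_const _
  have h_hom (r : ℝ) (hr : 0 < r) (x : E) :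
      r ^ Module.finrank ℝ E *
          dirEnergy (halfSpaceMeasure E) p f (0, r • x) ^ (-(Module.finrank ℝ E / p)) =
        dirEnergy (halfSpaceMeasure E) p f (0, x) ^ (-(Module.finrank ℝ E / p)) := by
    rw [show ((0 : ℝ), r • x) = r • (0, x) by simp, dirEnergy_smul, abs_of_pos hr,
      Real.mul_rpow (by positivity) (dirEnergy_nonneg ..), ← Real.rpow_mul hr.le, ← mul_assoc,
      ← Real.rpow_natCast, ← Real.rpow_add hr]
    field_simp
    simp
  have h_integrand (ξ : E) :
      dirEnergy (halfSpaceMeasure E) p (f ∘ sglEquiv hlam.ne' a B) (0, ξ) ^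
          (-(Module.finrank ℝ E / p)) =
        (lam * |LinearMap.det (B : E →ₗ[ℝ] E)|) ^ (Module.finrank ℝ E / p) *
          dirEnergy (halfSpaceMeasure E) p f (0, B ξ) ^ (-(Module.finrank ℝ E / p)) := by
    rw [dirEnergy_comp_sglEquiv p f hlam, Real.mul_rpow (by positivity) (dirEnergy_nonneg ..),
      Real.inv_rpow (by positivity), ← Real.rpow_neg (by positivity), neg_neg, sglEquiv_apply]
    simp
  simp only [h_integrand]
  rw [integral_const_mul, setIntegral_sphere_hausdorffMeasure_comp_linearEquiv_of_homogeneous B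
    h_meas (fun x ↦ Real.rpow_nonneg (dirEnergy_nonneg ..) _) h_hom]

theorem iInf_dirEnergy_comp_sglEquiv (q : ℝ) :
    ⨅ v, dirEnergy (halfSpaceMeasure E) p (f ∘ sglEquiv hlam.ne' a B) (1, v) ^ q =
      ((lam * |LinearMap.det (B : E →ₗ[ℝ] E)|)⁻¹ * lam ^ p) ^ q *
        ⨅ v, dirEnergy (halfSpaceMeasure E) p f (1, v) ^ q := by
  have h_surj : Function.Surjective fun v ↦ lam⁻¹ • (a + B v) := fun v ↦
    ⟨B.symm (lam • v - a), by simp [hlam.ne']⟩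
  have h_dir (v : E) : sglEquiv hlam.ne' a B (1, v) = lam • (1, lam⁻¹ • (a + B v)) := by
    simp [sglEquiv_apply, hlam.ne']
  rw [← h_surj.iInf_comp (g := fun v ↦ dirEnergy (halfSpaceMeasure E) p f (1, v) ^ q),
    Real.mul_iInf_of_nonneg (by positivity)]
  refine iInf_congr fun v ↦ ?_
  rw [dirEnergy_comp_sglEquiv p f hlam, h_dir, dirEnergy_smul, abs_of_pos hlam, ← mul_assoc,
    Real.mul_rpow (by positivity) (dirEnergy_nonneg ..)]

end HalfSpace

section AffineEnergy

variable {n : ℕ} {p a lam : ℝ}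

theorem omegaBall_pos {s : ℝ} (hs : -2 < s) : 0 < omegaBall s :=
  div_pos (by positivity) (Real.Gamma_pos_of_pos (by linarith))

theorem cNP_nonneg (hp : 0 < p) : 0 ≤ cNP n p := by
  have : (0 : ℝ) ≤ n := n.cast_nonneg
  have h₁ := (omegaBall_pos (s := n) (by linarith)).le
  have h₂ := (omegaBall_pos (s := p - 1) (by linarith)).le
  have h₃ := (omegaBall_pos (s := n + p - 2) (by linarith)).le
  unfold cNP
  positivity

theorem cNPA_nonneg (hn : 1 < n) (hp : 1 < p) (ha : 0 < p * (a - n) + n - 1) :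
    0 ≤ cNPA n p a := by
  have h_n : 0 < (n : ℝ) - 1 := sub_pos.mpr (Nat.one_lt_cast.mpr hn)
  have : 0 < p - 1 := sub_pos.mpr hp
  have h_a : 0 < p * (a - 1) := by nlinarith
  have := ha.le
  unfold cNPA
  positivity

theorem affE_nonneg (hp : 0 < p) (f : ℝ × EuclideanSpace ℝ (Fin (n - 1)) → ℝ) :
    0 ≤ affE n p f :=
  mul_nonneg (cNP_nonneg hp) <| Real.rpow_nonneg (integral_nonneg fun _ ↦
    Real.rpow_nonneg (dirEnergy_nonneg ..) _) _

theorem affE_comp_sglEquiv (hn : 1 < n) (hp : p ≠ 0)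
    (f : ℝ × EuclideanSpace ℝ (Fin (n - 1)) → ℝ) (hlam : 0 < lam)
    (v : EuclideanSpace ℝ (Fin (n - 1)))
    (B : EuclideanSpace ℝ (Fin (n - 1)) ≃ₗ[ℝ] EuclideanSpace ℝ (Fin (n - 1))) :
    affE n p (f ∘ sglEquiv hlam.ne' v B) =
      (lam * |LinearMap.det (B : _ →ₗ[ℝ] EuclideanSpace ℝ (Fin (n - 1)))|) ^ (-(1 / p)) *
        |LinearMap.det (B : _ →ₗ[ℝ] EuclideanSpace ℝ (Fin (n - 1)))| ^ (1 / ((n : ℝ) - 1)) *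
        affE n p f := by
  have h_rank : (Module.finrank ℝ (EuclideanSpace ℝ (Fin (n - 1))) : ℝ) = n - 1 := by
    rw [finrank_euclideanSpace_fin, Nat.cast_pred (by lia)]
  have h_n : (n : ℝ) - 1 ≠ 0 := (sub_pos.mpr (Nat.one_lt_cast.mpr hn)).ne'
  have : Nontrivial (EuclideanSpace ℝ (Fin (n - 1))) :=
    Module.nontrivial_of_finrank_pos (R := ℝ) (by simpa using hn)
  have h_sphere := setIntegral_sphere_dirEnergy_comp_sglEquiv p f hlam v B hp
  rw [h_rank, show (n : ℝ) - 1 - 1 = n - 2 by ring] at h_sphere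
  have h_int : 0 ≤ ∫ ξ in Metric.sphere 0 1, dirEnergy (halfSpaceMeasure _) p f (0, ξ) ^
      (-(((n : ℝ) - 1) / p)) ∂μH[(n : ℝ) - 2] :=
    integral_nonneg fun _ ↦ Real.rpow_nonneg (dirEnergy_nonneg ..) _
  have h_exp : ((n : ℝ) - 1) / p * -(1 / ((n : ℝ) - 1)) = -(1 / p) := by field_simp
  refine (congrArg (cNP (n - 1) p * · ^ (-(1 / ((n : ℝ) - 1)))) h_sphere).trans ?_
  rw [Real.mul_rpow (by positivity) (by positivity), Real.mul_rpow (by positivity) h_int,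
    ← Real.rpow_mul (by positivity), h_exp, Real.inv_rpow (by positivity),
    ← Real.rpow_neg (by positivity), neg_neg, mul_left_comm, mul_left_comm (cNP _ _), ← mul_assoc]
  rfl

theorem affA_scaling_exponents {b c m : ℝ} (hb : 0 < b) (hc : 0 < c) (hp : p ≠ 0) (hm : m ≠ 1)
    (ha : a ≠ 1) :
    (((c * b) ^ (-(1 / p)) * b ^ (1 / (m - 1))) ^ (p - 1 - (p - 1) * (a - m) / (a - 1)) *
        ((c * b)⁻¹ * c ^ p) ^ ((1 / p) * (1 + (p - 1) * (a - m) / (a - 1)))) ^ (1 / p) =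
      b ^ (-((a - p) / (p * (a - 1)))) * c ^ ((p - 1) * (a - m) / (p * (a - 1))) := by
  have h_m : m - 1 ≠ 0 := sub_ne_zero.mpr hm
  have h_a : a - 1 ≠ 0 := sub_ne_zero.mpr ha
  rw [← Real.exp_log hb, ← Real.exp_log hc]
  simp only [← Real.exp_mul, ← Real.exp_add, ← Real.exp_neg]
  congr 1
  field_simp
  ring

theorem affA_comp_sglEquiv (hn : 1 < n) (hp : 1 < p) (ha : 0 < p * (a - n) + n - 1)
    (f : ℝ × EuclideanSpace ℝ (Fin (n - 1)) → ℝ) (hlam : 0 < lam)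
    (v : EuclideanSpace ℝ (Fin (n - 1)))
    (B : EuclideanSpace ℝ (Fin (n - 1)) ≃ₗ[ℝ] EuclideanSpace ℝ (Fin (n - 1))) :
    affA n p a (f ∘ sglEquiv hlam.ne' v B) =
      |LinearMap.det (B : _ →ₗ[ℝ] EuclideanSpace ℝ (Fin (n - 1)))| ^
          (-((a - p) / (p * (a - 1)))) *
        lam ^ ((p - 1) * (a - (n : ℝ)) / (p * (a - 1))) * affA n p a f := by
  have h_p : 0 < p := one_pos.trans hp
  have h_n : (1 : ℝ) < n := Nat.one_lt_cast.mpr hn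
  have h_a : 1 < a := by nlinarith
  have h_det : 0 < |LinearMap.det (B : _ →ₗ[ℝ] EuclideanSpace ℝ (Fin (n - 1)))| :=
    abs_pos.mpr B.isUnit_det'.ne_zero
  have h_affE := affE_nonneg h_p f
  have h_cNPA := cNPA_nonneg hn hp ha
  have h_iInf := iInf_dirEnergy_comp_sglEquiv p f hlam v B
    ((1 / p) * (1 + (p - 1) * (a - (n : ℝ)) / (a - 1)))
  have h_unfold (g : ℝ × EuclideanSpace ℝ (Fin (n - 1)) → ℝ) : affA n p a g =
      (cNPA n p a ^ p * affE n p g ^ (p - 1 - (p - 1) * (a - (n : ℝ)) / (a - 1)) *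
        ⨅ w, dirEnergy (halfSpaceMeasure _) p g (1, w) ^
          ((1 / p) * (1 + (p - 1) * (a - (n : ℝ)) / (a - 1)))) ^ (1 / p) := rfl
  have h_inf : 0 ≤ ⨅ w, dirEnergy (halfSpaceMeasure _) p f (1, w) ^
      ((1 / p) * (1 + (p - 1) * (a - (n : ℝ)) / (a - 1))) :=
    Real.iInf_nonneg fun _ ↦ Real.rpow_nonneg (dirEnergy_nonneg ..) _
  rw [← affA_scaling_exponents h_det hlam h_p.ne' h_n.ne' h_a.ne', h_unfold, h_unfold, h_iInf,
    affE_comp_sglEquiv hn h_p.ne' f hlam, ← Real.mul_rpow (by positivity) (by positivity),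
    Real.mul_rpow (by positivity) h_affE]
  congr 1
  ring

end AffineEnergy

theorem affA_transform_general {n : ℕ} (hn : 2 ≤ n) (p a : ℝ) (hp : 1 < p)
    (ha : 0 < p * (a - n) + n - 1)
    (f : ℝ × EuclideanSpace ℝ (Fin (n - 1)) → ℝ)
    (lam : ℝ) (hlam : 0 < lam) (av : EuclideanSpace ℝ (Fin (n - 1)))
    (B : EuclideanSpace ℝ (Fin (n - 1)) ≃ₗ[ℝ] EuclideanSpace ℝ (Fin (n - 1))) (q : ℝ) :
    affA n p a (fun z => f (lam * z.1, z.1 • av + B z.2)) =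
      |LinearMap.det (B : EuclideanSpace ℝ (Fin (n - 1)) →ₗ[ℝ] EuclideanSpace ℝ (Fin (n - 1)))| ^
          (-((a - p) / (p * (a - 1)))) *
        lam ^ ((p - 1) * (a - (n : ℝ)) / (p * (a - 1))) * affA n p a f ∧
    ∫ x : EuclideanSpace ℝ (Fin (n - 1)), |f (lam * (0 : ℝ), (0 : ℝ) • av + B x)| ^ q =
      |LinearMap.det (B : EuclideanSpace ℝ (Fin (n - 1)) →ₗ[ℝ] EuclideanSpace ℝ (Fin (n - 1)))|⁻¹ *
        ∫ x : EuclideanSpace ℝ (Fin (n - 1)), |f ((0 : ℝ), x)| ^ q := by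
  have h_comp : (fun z ↦ f (lam * z.1, z.1 • av + B z.2)) = f ∘ sglEquiv hlam.ne' av B :=
    funext fun z ↦ by rw [Function.comp_apply, sglEquiv_apply]
  refine ⟨by rw [h_comp, affA_comp_sglEquiv hn hp ha f hlam], ?_⟩
  simp only [mul_zero, zero_smul, zero_add]
  exact integral_comp_linearEquiv volume B fun x ↦ |f (0, x)| ^ q

/-- Transformation of the affine energy `𝒜_p` and of the boundary norm under the action
`g(t,x) = f(λt, a⃗ t + Bx)` of `SGL_{n,+}`. -/
theorem affA_transform {n : ℕ} (hn : 2 ≤ n) (p a : ℝ) (hp1 : 1 < p) (hpn : p < n)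
    (ha : (n : ℝ) ≤ a)
    (f : ℝ × EuclideanSpace ℝ (Fin (n - 1)) → ℝ) (hf : Differentiable ℝ f)
    (lam : ℝ) (hlam : 0 < lam) (av : EuclideanSpace ℝ (Fin (n - 1)))
    (B : EuclideanSpace ℝ (Fin (n - 1)) ≃ₗ[ℝ] EuclideanSpace ℝ (Fin (n - 1))) :
    affA n p a (fun z => f (lam * z.1, z.1 • av + B z.2)) =
      |LinearMap.det (B : EuclideanSpace ℝ (Fin (n - 1)) →ₗ[ℝ] EuclideanSpace ℝ (Fin (n - 1)))| ^
          (-((a - p) / (p * (a - 1)))) *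
        lam ^ ((p - 1) * (a - (n : ℝ)) / (p * (a - 1))) * affA n p a f ∧
    ∫ x : EuclideanSpace ℝ (Fin (n - 1)),
        |f (lam * (0 : ℝ), (0 : ℝ) • av + B x)| ^ (p * (a - 1) / (a - p)) =
      |LinearMap.det (B : EuclideanSpace ℝ (Fin (n - 1)) →ₗ[ℝ] EuclideanSpace ℝ (Fin (n - 1)))|⁻¹ *
        ∫ x : EuclideanSpace ℝ (Fin (n - 1)), |f ((0 : ℝ), x)| ^ (p * (a - 1) / (a - p)) :=
  have : (2 : ℝ) ≤ n := mod_cast hn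
  affA_transform_general hn p a hp1 (by nlinarith) f lam hlam av B (p * (a - 1) / (a - p))
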